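/- Let k ≥ 6 be an integer. (i) For every k-L(2,1)-labelling L of the graph H', the pair (L(c), L(d)) belongs to the set {(0,k), (1,k), (k−1,0), (k,0)}. (ii) Conversely, for every pair (α,β) in this set there exists a k-L(2,1)-labelling L of H' with (L(c), L(d)) = (α,β). -/

import Mathlib

/-- For an integer `k`, a `k`-L(2,1)-labelling of a graph `G` is a map from the vertices
to `{0,1,…,k}` such that labels of adjacent vertices differ by at least `2` and vertices
at distance exactly `2` get distinct labels. -/
def IsL21Labelling {V : Type*} (G : SimpleGraph V) (k : ℕ) (L : V → ℕ) : Prop :=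
  (∀ v, L v ≤ k) ∧
  (∀ x y, G.Adj x y → 2 ≤ |(L x : ℤ) - (L y : ℤ)|) ∧
  (∀ x y, G.dist x y = 2 → L x ≠ L y)

/-- The vertices of the graph `H'` for a given `k`:
`c, d, e, f₁, …, f_{k-3}, g, h, i`. -/
inductive HpV (k : ℕ) | c | d | e | f (j : Fin (k - 3)) | g | h | i
deriving DecidableEq

/-- The adjacency generating relation of `H'`: edges `cd`, `de`, `gh`, `gi`,
and `d fⱼ`, `g fⱼ` for every `j`. -/
def HpAdj (k : ℕ) : HpV k → HpV k → Prop := fun x y =>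
  (x = HpV.c ∧ y = HpV.d) ∨ (x = HpV.d ∧ y = HpV.e) ∨
  (x = HpV.g ∧ y = HpV.h) ∨ (x = HpV.g ∧ y = HpV.i) ∨
  (∃ j, (x = HpV.d ∧ y = HpV.f j) ∨ (x = HpV.g ∧ y = HpV.f j))

/-- The graph `H'`. -/
def Hp (k : ℕ) : SimpleGraph (HpV k) := SimpleGraph.fromRel (HpAdj k)

/-!
Labels on the neighbours of a fixed vertex are pairwise distinct. A vertex `v` with
`0 < L v < k` has at most `k - 2` labels available for its neighbours, so a vertex of degree at
least `k - 1` is labelled `0` or `k`. In `H'` both `d` and `g` have degree `k - 1`. A common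
neighbour of theirs sees both `0` and `k`, so its label lies in `{2, …, k - 2}`, and the `k - 3`
vertices `f j` exhaust that interval. Hence `L c` is one of `0, 1, k - 1, k`, and it is far from
`L d ∈ {0, k}`. Conversely, one explicit family of labellings realises two of the four pairs, and
the reflection `a ↦ k - a` gives the other two.
-/

section General

variable {V : Type*} {G : SimpleGraph V} {k : ℕ} {L : V → ℕ}

theorem two_le_abs_natCast_sub_iff {a b : ℕ} :
    2 ≤ |(a : ℤ) - b| ↔ a + 2 ≤ b ∨ b + 2 ≤ a := by
  rw [le_abs]
  lia

theorem graphDist_eq_two_iff {x y : V} :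
    G.dist x y = 2 ↔ x ≠ y ∧ ¬G.Adj x y ∧ (G.commonNeighbors x y).Nonempty := by
  rw [← SimpleGraph.edist_eq_two_iff]
  exact ENat.toNat_eq_iff two_ne_zero

theorem isL21Labelling_iff_injOn_neighborSet :
    IsL21Labelling G k L ↔
      (∀ v, L v ≤ k) ∧ (∀ x y, G.Adj x y → L x + 2 ≤ L y ∨ L y + 2 ≤ L x) ∧
        ∀ v, Set.InjOn L (G.neighborSet v) := by
  simp only [IsL21Labelling, two_le_abs_natCast_sub_iff]
  refine and_congr_right fun _ ↦ and_congr_right fun hadj ↦ ⟨fun hdist v x hx y hy hxy ↦ ?_,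
    fun hinj x y hxy ↦ ?_⟩
  · by_contra hne
    have hnadj : ¬G.Adj x y := fun h ↦ by have := hadj x y h; lia
    exact hdist x y (graphDist_eq_two_iff.2 ⟨hne, hnadj, v, hx.symm, hy.symm⟩) hxy
  · obtain ⟨hne, -, w, hxw, hyw⟩ := graphDist_eq_two_iff.1 hxy
    exact (hinj w).ne hxw.symm hyw.symm hne

namespace IsL21Labelling

theorem add_two_le_or_add_two_le (hL : IsL21Labelling G k L) {x y : V} (hxy : G.Adj x y) :
    L x + 2 ≤ L y ∨ L y + 2 ≤ L x :=
  (isL21Labelling_iff_injOn_neighborSet.1 hL).2.1 x y hxy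

theorem injOn_neighborSet (hL : IsL21Labelling G k L) (v : V) :
    Set.InjOn L (G.neighborSet v) :=
  (isL21Labelling_iff_injOn_neighborSet.1 hL).2.2 v

theorem reflect (hL : IsL21Labelling G k L) : IsL21Labelling G k fun v ↦ k - L v := by
  refine isL21Labelling_iff_injOn_neighborSet.2
    ⟨fun v ↦ Nat.sub_le k (L v), fun x y hxy ↦ ?_, fun v x hx y hy hxy ↦ ?_⟩
  · have := hL.add_two_le_or_add_two_le hxy
    have := hL.1 x
    have := hL.1 y
    lia
  · have := hL.1 x
    have := hL.1 y
    exact hL.injOn_neighborSet v hx hy (by lia)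

theorem eq_zero_or_eq_of_le_card_neighbors (hL : IsL21Labelling G k L) {v : V} {s : Finset V}
    (hs : ↑s ⊆ G.neighborSet v) (hcard : k ≤ s.card + 1) : L v = 0 ∨ L v = k := by
  by_contra! hv
  have hvk := hL.1 v
  have hmaps : Set.MapsTo L s (Finset.range (L v - 1) ∪ Finset.Icc (L v + 2) k : Finset ℕ) := by
    intro x hx
    have := hL.1 x
    have := hL.add_two_le_or_add_two_le (hs hx)
    simp only [Finset.mem_coe, Finset.mem_union, Finset.mem_range, Finset.mem_Icc]
    lia
  have hle := (Finset.card_le_card_of_injOn L hmaps ((hL.injOn_neighborSet v).mono hs)).trans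
    (Finset.card_union_le _ _)
  rw [Finset.card_range, Nat.card_Icc] at hle
  lia

theorem mem_Icc_of_mem_commonNeighbors (hL : IsL21Labelling G k L) {u v w : V} (huv : u ≠ v)
    (hu : L u = 0 ∨ L u = k) (hv : L v = 0 ∨ L v = k) (hw : w ∈ G.commonNeighbors u v) :
    L w ∈ Finset.Icc 2 (k - 2) := by
  have hne : L u ≠ L v := (hL.injOn_neighborSet w).ne hw.1.symm hw.2.symm huv
  have := hL.1 w
  have := hL.add_two_le_or_add_two_le hw.1
  have := hL.add_two_le_or_add_two_le hw.2
  rw [Finset.mem_Icc]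
  lia

theorem image_commonNeighbors_eq_Icc (hL : IsL21Labelling G k L) {u v : V} (huv : u ≠ v)
    (hu : L u = 0 ∨ L u = k) (hv : L v = 0 ∨ L v = k) {s : Finset V}
    (hs : ↑s ⊆ G.commonNeighbors u v) (hcard : k ≤ s.card + 3) :
    s.image L = Finset.Icc 2 (k - 2) := by
  have hinj : Set.InjOn L s :=
    (hL.injOn_neighborSet u).mono (hs.trans (G.commonNeighbors_subset_neighborSet_left u v))
  refine Finset.eq_of_subset_of_card_le (Finset.image_subset_iff.2 fun w hw ↦
    hL.mem_Icc_of_mem_commonNeighbors huv hu hv (hs hw)) ?_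
  rw [Finset.card_image_of_injOn hinj, Nat.card_Icc]
  lia

theorem label_pair_mem (hL : IsL21Labelling G k L) {u v x : V} (huv : u ≠ v)
    (hu : L u = 0 ∨ L u = k) (hv : L v = 0 ∨ L v = k) {s : Finset V}
    (hs : ↑s ⊆ G.commonNeighbors u v) (hcard : k ≤ s.card + 3) (hux : G.Adj u x) (hx : x ∉ s) :
    (L x, L u) ∈ ({(0, k), (1, k), (k - 1, 0), (k, 0)} : Set (ℕ × ℕ)) := by
  have hxIcc : L x ∉ Finset.Icc 2 (k - 2) := by
    rw [← hL.image_commonNeighbors_eq_Icc huv hu hv hs hcard, Finset.mem_image]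
    rintro ⟨y, hy, hyx⟩
    exact hx (hL.injOn_neighborSet u (hs hy).1 hux hyx ▸ hy)
  have := hL.1 x
  have := hL.add_two_le_or_add_two_le hux
  simp only [Finset.mem_Icc, Set.mem_insert_iff, Set.mem_singleton_iff, Prod.mk.injEq] at hxIcc ⊢
  lia

end IsL21Labelling

end General

namespace Hp

variable (k : ℕ)

theorem neighborSet_c : (Hp k).neighborSet .c = {.d} := by
  ext x; cases x <;> simp [Hp, HpAdj]

theorem neighborSet_d :
    (Hp k).neighborSet .d = insert .c (insert .e (Set.range .f)) := by
  ext x; cases x <;> simp [Hp, HpAdj]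

theorem neighborSet_e : (Hp k).neighborSet .e = {.d} := by
  ext x; cases x <;> simp [Hp, HpAdj]

theorem neighborSet_f (j : Fin (k - 3)) : (Hp k).neighborSet (.f j) = {.d, .g} := by
  ext x; cases x <;> simp [Hp, HpAdj]

theorem neighborSet_g :
    (Hp k).neighborSet .g = insert .h (insert .i (Set.range .f)) := by
  ext x; cases x <;> simp [Hp, HpAdj]

theorem neighborSet_h : (Hp k).neighborSet .h = {.g} := by
  ext x; cases x <;> simp [Hp, HpAdj]

theorem neighborSet_i : (Hp k).neighborSet .i = {.g} := by
  ext x; cases x <;> simp [Hp, HpAdj]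

/-- The set `{f₁, …, f_{k-3}}` of common neighbours of `d` and `g`. -/
def fVertices : Finset (HpV k) := Finset.univ.image .f

theorem card_fVertices : (fVertices k).card = k - 3 := by
  rw [fVertices, Finset.card_image_of_injective _ fun _ _ ↦ HpV.f.inj, Finset.card_fin]

theorem coe_fVertices : (fVertices k : Set (HpV k)) = Set.range .f := by
  rw [fVertices, Finset.coe_image, Finset.coe_univ, Set.image_univ]

theorem commonNeighbors_d_g : (Hp k).commonNeighbors .d .g = fVertices k := by
  rw [SimpleGraph.commonNeighbors_eq, neighborSet_d, neighborSet_g, coe_fVertices]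
  ext x; cases x <;> simp

variable {k} {L : HpV k → ℕ}

theorem label_eq_zero_or_eq_of_neighborSet_eq (hL : IsL21Labelling (Hp k) k L) {v x y : HpV k}
    (hxy : x ≠ y) (hx : x ∉ fVertices k) (hy : y ∉ fVertices k)
    (hv : (Hp k).neighborSet v = insert x (insert y (Set.range .f))) : L v = 0 ∨ L v = k := by
  refine hL.eq_zero_or_eq_of_le_card_neighbors (s := insert x (insert y (fVertices k))) ?_ ?_
  · rw [Finset.coe_insert, Finset.coe_insert, coe_fVertices, hv]
  · rw [Finset.card_insert_of_notMem (by simp [hxy, hx]), Finset.card_insert_of_notMem hy,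
      card_fVertices]
    lia

theorem label_d_eq_zero_or_eq (hL : IsL21Labelling (Hp k) k L) : L .d = 0 ∨ L .d = k :=
  label_eq_zero_or_eq_of_neighborSet_eq hL (by simp) (by simp [fVertices]) (by simp [fVertices])
    (neighborSet_d k)

theorem label_g_eq_zero_or_eq (hL : IsL21Labelling (Hp k) k L) : L .g = 0 ∨ L .g = k :=
  label_eq_zero_or_eq_of_neighborSet_eq hL (by simp) (by simp [fVertices]) (by simp [fVertices])
    (neighborSet_g k)

theorem label_c_d_mem (hL : IsL21Labelling (Hp k) k L) :
    (L .c, L .d) ∈ ({(0, k), (1, k), (k - 1, 0), (k, 0)} : Set (ℕ × ℕ)) := by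
  refine hL.label_pair_mem (v := .g) (by simp) (label_d_eq_zero_or_eq hL)
    (label_g_eq_zero_or_eq hL) (commonNeighbors_d_g k).ge ?_ ?_ (by simp [fVertices])
  · rw [card_fVertices]
    lia
  · simp [← SimpleGraph.mem_neighborSet, neighborSet_d]

/-- For `a ≤ 1`, a labelling of `H'` in which `d` and `g` receive the two extreme labels and
`c` receives `a`; the index `j` starts at `0`, so the labels `j + 2` fill `{2, …, k - 2}`. -/
def topLabelling (k a : ℕ) : HpV k → ℕ
  | .c => a
  | .d => k
  | .e => 1 - a
  | .f j => j + 2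
  | .g => 0
  | .h => k - 1
  | .i => k

theorem injOn_topLabelling_neighborSet {a : ℕ} (hk : 3 ≤ k) (ha : a ≤ 1) (v : HpV k) :
    Set.InjOn (topLabelling k a) ((Hp k).neighborSet v) := by
  have hf : Set.InjOn (topLabelling k a) (Set.range .f) := by
    rintro _ ⟨i, rfl⟩ _ ⟨j, rfl⟩ hij
    exact congrArg HpV.f (Fin.ext (Nat.add_right_cancel hij))
  cases v with
  | c => simp only [neighborSet_c, Set.injOn_singleton]
  | e => simp only [neighborSet_e, Set.injOn_singleton]
  | h => simp only [neighborSet_h, Set.injOn_singleton]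
  | i => simp only [neighborSet_i, Set.injOn_singleton]
  | d =>
    rw [neighborSet_d, Set.injOn_insert (by simp), Set.injOn_insert (by simp)]
    simp only [hf, topLabelling, Set.mem_image, Set.mem_insert_iff, Set.mem_range,
      exists_eq_or_imp, exists_exists_eq_and, not_or, not_exists, true_and]
    lia
  | f j =>
    rw [neighborSet_f, Set.injOn_pair]
    simp only [topLabelling, reduceCtorEq, imp_false]
    lia
  | g =>
    rw [neighborSet_g, Set.injOn_insert (by simp), Set.injOn_insert (by simp)]
    simp only [hf, topLabelling, Set.mem_image, Set.mem_insert_iff, Set.mem_range,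
      exists_eq_or_imp, exists_exists_eq_and, not_or, not_exists, true_and]
    lia

theorem isL21Labelling_topLabelling {a : ℕ} (hk : 3 ≤ k) (ha : a ≤ 1) :
    IsL21Labelling (Hp k) k (topLabelling k a) := by
  refine isL21Labelling_iff_injOn_neighborSet.2
    ⟨fun v ↦ ?_, fun x y hxy ↦ ?_, injOn_topLabelling_neighborSet hk ha⟩
  · cases v <;> simp only [topLabelling] <;> lia
  · have hgen {x y : HpV k} (h : HpAdj k x y) :
        topLabelling k a x + 2 ≤ topLabelling k a y ∨
          topLabelling k a y + 2 ≤ topLabelling k a x := by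
      rcases h with
          ⟨rfl, rfl⟩ | ⟨rfl, rfl⟩ | ⟨rfl, rfl⟩ | ⟨rfl, rfl⟩ | ⟨j, ⟨rfl, rfl⟩ | ⟨rfl, rfl⟩⟩ <;>
        simp only [topLabelling] <;> lia
    exact hxy.2.elim hgen fun h ↦ (hgen h).symm

end Hp

theorem stmt_9_general (k : ℕ) (hk : 3 ≤ k) :
    (∀ L : HpV k → ℕ, IsL21Labelling (Hp k) k L →
      (L HpV.c, L HpV.d) ∈ ({(0, k), (1, k), (k - 1, 0), (k, 0)} : Set (ℕ × ℕ))) ∧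
    (∀ p ∈ ({(0, k), (1, k), (k - 1, 0), (k, 0)} : Set (ℕ × ℕ)),
      ∃ L : HpV k → ℕ, IsL21Labelling (Hp k) k L ∧ (L HpV.c, L HpV.d) = p) := by
  have h0 := Hp.isL21Labelling_topLabelling hk zero_le_one
  have h1 := Hp.isL21Labelling_topLabelling hk le_rfl
  refine ⟨fun _ ↦ Hp.label_c_d_mem, ?_⟩
  rintro _ (rfl | rfl | rfl | rfl)
  · exact ⟨_, h0, rfl⟩
  · exact ⟨_, h1, rfl⟩
  · exact ⟨_, h1.reflect, by simp [Hp.topLabelling]⟩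
  · exact ⟨_, h0.reflect, by simp [Hp.topLabelling]⟩

/-- For `k ≥ 6`: (i) every `k`-L(2,1)-labelling `L` of `H'` has
`(L c, L d) ∈ {(0,k),(1,k),(k-1,0),(k,0)}`; (ii) every pair in this set is realised
by some `k`-L(2,1)-labelling of `H'`. -/
theorem stmt_9 (k : ℕ) (hk : 6 ≤ k) :
    (∀ L : HpV k → ℕ, IsL21Labelling (Hp k) k L →
      (L HpV.c, L HpV.d) ∈ ({(0,k),(1,k),(k-1,0),(k,0)} : Set (ℕ × ℕ))) ∧
    (∀ p ∈ ({(0,k),(1,k),(k-1,0),(k,0)} : Set (ℕ × ℕ)),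
      ∃ L : HpV k → ℕ, IsL21Labelling (Hp k) k L ∧ (L HpV.c, L HpV.d) = p) :=
  stmt_9_general k (by lia)
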